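/- arXiv:2301.04079 — 2 statements merged into one kernel-verified Lean document; each statement's English description precedes it below -/
import Mathlib

section
/- Let C be an abelian category satisfying the minimal cover axiom, and let X be a non-negative chain complex in C such that X_n is projective for every n ≥ 0 and H_n(X) has projective dimension at most 1 for every n ≥ 0. Then X is indecomposable if, and only if, one of the following holds: (i) H_n(X) = 0 for all n, in which case X is isomorphic to D^n(Y) for some n and some indecomposable projective object Y of C; or (ii) H_n(X) ≠ 0 for exactly one degree n, in which case H_n(X) is indecomposable and X is isomorphic to S^n(P) where P is a minimal projective resolution of H_n(X). -/
open CategoryTheory CategoryTheory.Limits ZeroObject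

universe v u

variable {C : Type u} [Category.{v} C] [Abelian C]

/-- `p : P ⟶ X` is a minimal projective cover. -/
def IsMinimalProjectiveCover {E : Type*} [Category E] {P X : E} (p : P ⟶ X) : Prop :=
  Projective P ∧ Epi p ∧ ∀ φ : P ⟶ P, φ ≫ p = p → IsIso φ

/-- A category satisfies the minimal cover axiom if every object admits a minimal
projective cover. -/
def HasMinimalCovers (E : Type*) [Category E] : Prop :=
  ∀ X : E, ∃ (P : E) (p : P ⟶ X), IsMinimalProjectiveCover p

/-- Degrees of the disk `D^n(A)`: `A` in degrees `n` and `n - 1`, and `0` elsewhere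
(for `n = 0`, `A` concentrated in degree `0`). -/
noncomputable def diskObj (n : ℕ) (A : C) : ℕ → C := fun i =>
  if i = n ∨ i + 1 = n then A else 0

/-- Differentials of the disk `D^n(A)`: the identity of `A` in degree `n`. -/
noncomputable def diskD (n : ℕ) (A : C) :
    ∀ k : ℕ, diskObj n A (k + 1) ⟶ diskObj n A k := fun k =>
  if h : k + 1 = n then
    eqToHom (if_pos (Or.inl h)) ≫ eqToHom (if_pos (Or.inr h)).symm
  else 0

/-- The disk `D^n(A)`: the chain complex equal to `A` in degrees `n` and `n − 1` with
`n`-th boundary the identity, and `0` elsewhere; `D^0(A)` is `A` concentrated in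
degree `0`. -/
noncomputable def disk (n : ℕ) (A : C) : ChainComplex C ℕ :=
  ChainComplex.of (diskObj n A) (diskD n A) (by
    intro k
    have h2 : ¬(k + 1 + 1 = n) ∨ ¬(k + 1 = n) := by omega
    rcases h2 with h2 | h2 <;> simp [diskD, h2])

/-- Degrees of the suspension of a chain complex. -/
noncomputable def suspObj (X : ChainComplex C ℕ) : ℕ → C
  | 0 => 0
  | n + 1 => X.X n

/-- Differentials of the suspension of a chain complex. -/
noncomputable def suspD (X : ChainComplex C ℕ) :
    ∀ k : ℕ, suspObj X (k + 1) ⟶ suspObj X k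
  | 0 => 0
  | k + 1 => X.d (k + 1) k

/-- The suspension `S(X)` of a non-negative chain complex `X`. -/
noncomputable def susp (X : ChainComplex C ℕ) : ChainComplex C ℕ :=
  ChainComplex.of (suspObj X) (suspD X) (by
    intro k
    match k with
    | 0 => exact comp_zero
    | k + 1 => exact X.d_comp_d _ _ _)

/-- The `n`-fold suspension `Sⁿ(X)` of a non-negative chain complex `X`. -/
noncomputable def suspN : ℕ → ChainComplex C ℕ → ChainComplex C ℕ
  | 0, X => X
  | n + 1, X => susp (suspN n X)

/-- Degrees of the chain complex with `P0` in degree `0` and `P1` in degree `1`. -/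
noncomputable def twoObj (P0 P1 : C) : ℕ → C
  | 0 => P0
  | 1 => P1
  | _ + 2 => 0

/-- Differentials of the chain complex with `P1 ⟶ P0` concentrated in degrees `1`, `0`. -/
noncomputable def twoD {P0 P1 : C} (d : P1 ⟶ P0) :
    ∀ k : ℕ, twoObj P0 P1 (k + 1) ⟶ twoObj P0 P1 k
  | 0 => d
  | _ + 1 => 0

/-- The chain complex concentrated in degrees `0` and `1`, given by a morphism
`d : P1 ⟶ P0`. -/
noncomputable def twoComplex {P0 P1 : C} (d : P1 ⟶ P0) : ChainComplex C ℕ :=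
  ChainComplex.of (twoObj P0 P1) (twoD d) (by
    intro k
    exact zero_comp)

/-- `IsMinimalLen1Resolution d p` expresses that `0 ⟶ P1 ⟶ P0 ⟶ A ⟶ 0` is a minimal
projective resolution of `A` of length at most 1: `d` is a monomorphism,
`p : P0 ⟶ A` is a minimal projective cover, and the induced morphism
`P1 ⟶ ker p` is a minimal projective cover. -/
def IsMinimalLen1Resolution {P1 P0 A : C} (d : P1 ⟶ P0) (p : P0 ⟶ A) : Prop :=
  Mono d ∧ ∃ w : d ≫ p = 0,
    IsMinimalProjectiveCover p ∧ IsMinimalProjectiveCover (kernel.lift p d w)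

/-- An object has projective dimension at most 1: it admits a projective resolution
`0 ⟶ P1 ⟶ P0 ⟶ A ⟶ 0` of length at most 1. -/
def ProjDimLE1 (A : C) : Prop :=
  ∃ (P1 P0 : C) (d : P1 ⟶ P0) (p : P0 ⟶ A) (w : d ≫ p = 0),
    Projective P1 ∧ Projective P0 ∧ Mono d ∧ Epi p ∧ (ShortComplex.mk d p w).Exact

section Generic

variable {E : Type*} [Category E]

/-- Idempotent criterion for indecomposability. -/
theorem indec_iff_idem [Preadditive E] [HasBinaryBiproducts E] [IsIdempotentComplete E] (X : E) :
    Indecomposable X ↔ ¬ IsZero X ∧ ∀ e : X ⟶ X, e ≫ e = e → e = 0 ∨ e = 𝟙 X := by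
  refine and_congr_right fun _ => ⟨fun h e he => ?_, fun h Y Z i => ?_⟩
  · obtain ⟨Y, i, r, h1, h2⟩ := IsIdempotentComplete.idempotents_split X e he
    have he' : (𝟙 X - e) ≫ (𝟙 X - e) = 𝟙 X - e := by
      simp [he]
    obtain ⟨Z, i', r', h3, h4⟩ := IsIdempotentComplete.idempotents_split X _ he'
    have hsum : e + (𝟙 X - e) = 𝟙 X := by abel
    have hz : i ≫ r' = 0 := by
      have : i ≫ (r' ≫ i') ≫ r' = 0 := by
        rw [h4, ← h2]; simp [reassoc_of% h1]
      simpa [h3] using this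
    have hz' : i' ≫ r = 0 := by
      have : i' ≫ (r ≫ i) ≫ r = 0 := by
        rw [h2]
        have : i' = i' ≫ (r' ≫ i') := by rw [reassoc_of% h3]
        rw [this, h4]
        simp [reassoc_of% he]
      simpa [h1] using this
    have iso : X ≅ Y ⊞ Z :=
      { hom := biprod.lift r r'
        inv := biprod.desc i i'
        hom_inv_id := by rw [biprod.lift_desc, h2, h4, hsum]
        inv_hom_id := by
          apply biprod.hom_ext' <;> apply biprod.hom_ext <;> simp [h1, h3, hz, hz'] }
    rcases h Y Z iso with hY | hZ
    · left; rw [← h2, hY.eq_of_tgt r 0, zero_comp]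
    · right
      have : 𝟙 X - e = 0 := by rw [← h4, hZ.eq_of_tgt r' 0, zero_comp]
      exact (sub_eq_zero.1 this).symm
  · rcases h (i.hom ≫ biprod.fst ≫ biprod.inl ≫ i.inv) (by simp) with h0 | h1
    · left
      rw [IsZero.iff_id_eq_zero]
      have := congrArg (fun t => biprod.inl ≫ i.inv ≫ t ≫ i.hom ≫ biprod.fst) h0
      simpa using this
    · right
      rw [IsZero.iff_id_eq_zero]
      have := congrArg (fun t => biprod.inr ≫ i.inv ≫ t ≫ i.hom ≫ biprod.snd) h1
      simpa using this.symm

theorem idem_iso_eq_id {X : E} (e : X ⟶ X) (he : e ≫ e = e) (h : IsIso e) : e = 𝟙 X := by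
  rw [← cancel_epi e, he, Category.comp_id]

end Generic

theorem hpd_of {A : C} (h : ProjDimLE1 A) : HasProjectiveDimensionLT A 2 := by
  obtain ⟨P1, P0, d, p, w, h1, h0, hm, he, hex⟩ := h
  have hS : (ShortComplex.mk d p w).ShortExact := { exact := hex, mono_f := hm, epi_g := he }
  exact (hS.hasProjectiveDimensionLT_X₃_iff 0 h0).2 (inferInstanceAs (HasProjectiveDimensionLT P1 1))

theorem ker_projective {A Q : C} (h : HasProjectiveDimensionLT A 2) (z : Q ⟶ A) [Epi z]
    (hQ : Projective Q) : Projective (kernel z) := by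
  have hS : (ShortComplex.mk (kernel.ι z) z (kernel.condition z)).ShortExact :=
    { exact := ShortComplex.exact_kernel z }
  have := (hS.hasProjectiveDimensionLT_X₃_iff 0 hQ).1 h
  exact projective_iff_hasProjectiveDimensionLT_one.2 this

theorem exists_endo (X : ChainComplex C ℕ) (n : ℕ) (e0 : X.X n ⟶ X.X n)
    (e1 : X.X (n + 1) ⟶ X.X (n + 1)) (h2 : X.d (n + 2) (n + 1) ≫ e1 = 0)
    (h1 : e1 ≫ X.d (n + 1) n = X.d (n + 1) n ≫ e0)
    (h0 : ∀ j, e0 ≫ X.d n j = 0) :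
    ∃ E : X ⟶ X, E.f n = e0 ∧ E.f (n + 1) = e1 ∧ ∀ j, j ≠ n → j ≠ n + 1 → E.f j = 0 := by
  classical
  let f : ∀ j, X.X j ⟶ X.X j :=
    Function.update (Function.update (fun j => (0 : X.X j ⟶ X.X j)) n e0) (n + 1) e1
  have f1 : f (n + 1) = e1 := by simp [f]
  have f0 : f n = e0 := by
    simp [f]
  have fz : ∀ j, j ≠ n → j ≠ n + 1 → f j = 0 := by
    intro j a b
    simp [f, Function.update_of_ne a, Function.update_of_ne b]
  refine ⟨{ f := f, comm' := ?_ }, f0, f1, fz⟩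
  rintro i j hij
  obtain rfl : j + 1 = i := hij
  by_cases hj : j = n
  · subst hj; rw [f0, f1, h1]
  by_cases hj1 : j = n + 1
  · subst hj1; rw [f1, h2, fz _ (by omega) (by omega), zero_comp]
  rw [fz j hj hj1, comp_zero]
  by_cases hj2 : j + 1 = n
  · subst hj2; rw [f0, h0]
  · rw [fz _ hj2 (by omega), zero_comp]

theorem hom_ext_two {X Y : ChainComplex C ℕ} (n : ℕ)
    (hX : ∀ j, j ≠ n → j ≠ n + 1 → IsZero (X.X j)) {f g : X ⟶ Y}
    (h0 : f.f n = g.f n) (h1 : f.f (n + 1) = g.f (n + 1)) : f = g := by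
  ext j
  by_cases hj : j = n
  · subst hj; exact h0
  by_cases hj1 : j = n + 1
  · subst hj1; exact h1
  exact (hX j hj hj1).eq_of_src _ _

theorem iso_of_two {K L : ChainComplex C ℕ} (n : ℕ)
    (hK : ∀ j, j ≠ n → j ≠ n + 1 → IsZero (K.X j))
    (hL : ∀ j, j ≠ n → j ≠ n + 1 → IsZero (L.X j))
    (a : K.X (n + 1) ≅ L.X (n + 1)) (b : K.X n ≅ L.X n)
    (w : a.hom ≫ L.d (n + 1) n = K.d (n + 1) n ≫ b.hom) : Nonempty (K ≅ L) := by
  classical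
  let f : ∀ j, K.X j ≅ L.X j := fun j =>
    if h : j = n then h ▸ b else if h' : j = n + 1 then h' ▸ a else
      (hK j h h').iso (hL j h h')
  have f0 : f n = b := by simp [f]
  have f1 : f (n + 1) = a := by simp [f]
  refine ⟨HomologicalComplex.Hom.isoOfComponents f ?_⟩
  rintro i j hij
  obtain rfl : j + 1 = i := hij
  by_cases hj : j = n
  · subst hj; rw [f0, f1, w]
  by_cases hj1 : j = n + 1
  · exact (hK (j + 1) (by omega) (by omega)).eq_of_src _ _
  exact (hL j hj hj1).eq_of_tgt _ _

theorem disk_zero (n : ℕ) (Y : C) (j : ℕ) (h : j ≠ n) (h' : j + 1 ≠ n) :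
    IsZero ((disk n Y).X j) := by
  have : (disk n Y).X j = 0 := if_neg (by tauto)
  rw [this]; exact isZero_zero C

theorem disk_iso_top (n : ℕ) (Y : C) : Nonempty ((disk n Y).X n ≅ Y) :=
  ⟨eqToIso (if_pos (Or.inl rfl))⟩

theorem disk_iso (n : ℕ) (Y : C) : ∃ (a : (disk (n + 1) Y).X (n + 1) ≅ Y)
    (b : (disk (n + 1) Y).X n ≅ Y), (disk (n + 1) Y).d (n + 1) n ≫ b.hom = a.hom := by
  refine ⟨eqToIso (if_pos (Or.inl rfl)), eqToIso (if_pos (Or.inr rfl)), ?_⟩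
  have : (disk (n + 1) Y).d (n + 1) n = diskD (n + 1) Y n := ChainComplex.of_d _ _ _
  have h2 : diskD (n + 1) Y n ≫ eqToHom (if_pos (Or.inr rfl) : diskObj (n + 1) Y n = Y) =
      eqToHom (if_pos (Or.inl rfl) : diskObj (n + 1) Y (n + 1) = Y) := by
    simp only [diskD, dif_pos]
    exact (Category.assoc _ _ _).trans ((congrArg (fun t => _ ≫ t) (eqToHom_trans _ _)).trans
      (eqToHom_trans _ _))
  exact (congrArg (fun t : diskObj (n + 1) Y (n + 1) ⟶ diskObj (n + 1) Y n =>
    t ≫ eqToHom (if_pos (Or.inr rfl) : diskObj (n + 1) Y n = Y)) this).trans h2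

theorem suspN_spec {P0 P1 : C} (d : P1 ⟶ P0) (n : ℕ) :
    (∀ j, j ≠ n → j ≠ n + 1 → IsZero ((suspN n (twoComplex d)).X j)) ∧
    ∃ (a : (suspN n (twoComplex d)).X (n + 1) ≅ P1) (b : (suspN n (twoComplex d)).X n ≅ P0),
      a.hom ≫ d = (suspN n (twoComplex d)).d (n + 1) n ≫ b.hom := by
  induction n with
  | zero =>
    refine ⟨?_, Iso.refl _, Iso.refl _, ?_⟩
    · rintro (_ | _ | j) h h'
      · exact absurd rfl h
      · exact absurd rfl h'
      · exact isZero_zero C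
    · have : (twoComplex d).d 1 0 = d := ChainComplex.of_d (twoObj P0 P1) (twoD d) 0
      exact (Category.id_comp d).trans ((Category.comp_id d).symm.trans
        (congrArg (fun t : P1 ⟶ P0 => t ≫ 𝟙 P0) this.symm))
  | succ n ih =>
    obtain ⟨hz, a, b, w⟩ := ih
    refine ⟨?_, a, b, ?_⟩
    · rintro (_ | j) h h'
      · exact isZero_zero C
      · exact hz j (by omega) (by omega)
    · have : (suspN (n + 1) (twoComplex d)).d (n + 1 + 1) (n + 1) =
        (suspN n (twoComplex d)).d (n + 1) n := ChainComplex.of_d _ _ _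
      exact w.trans (congrArg (fun t : (suspN n (twoComplex d)).X (n + 1) ⟶
        (suspN n (twoComplex d)).X n => t ≫ b.hom) this.symm)

/-- The cycles of a complex of projectives with homology of projective dimension at most one
are split. -/
theorem cycles_split (X : ChainComplex C ℕ) (hcof : ∀ n : ℕ, Projective (X.X n))
    (hpd : ∀ n : ℕ, ProjDimLE1 (X.homology n)) (n : ℕ) :
    ∃ σ : X.X n ⟶ X.cycles n, X.iCycles n ≫ σ = 𝟙 _ := by
  induction n with
  | zero =>
    have : IsIso (X.iCycles 0) := X.isIso_iCycles 0 0 (by simp) (by simp)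
    exact ⟨inv (X.iCycles 0), by simp⟩
  | succ n ih =>
    obtain ⟨σ, hσ⟩ := ih
    have hZ : Projective (X.cycles n) := by
      have := hcof n
      exact Retract.projective ⟨X.iCycles n, σ, hσ⟩
    have hB := ker_projective (hpd_of (hpd n)) (X.homologyπ n) hZ
    have hex := ShortComplex.exact_of_g_is_cokernel
      (ShortComplex.mk (X.toCycles (n + 1) n) (X.homologyπ n) (by simp))
      (X.homologyIsCokernel (n + 1) n (by simp))
    have hepi : Epi (kernel.lift (X.homologyπ n) (X.toCycles (n + 1) n) (by simp)) :=
      (ShortComplex.exact_iff_epi_kernel_lift _).1 hex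
    obtain ⟨τ, hτ⟩ : ∃ τ, τ ≫ (kernel.lift (X.homologyπ n) (X.toCycles (n + 1) n) (by simp)) = 𝟙 _ :=
      ⟨Projective.factorThru (𝟙 _) _, Projective.factorThru_comp _ _⟩
    have hτ' : τ ≫ X.d (n + 1) n = kernel.ι (X.homologyπ n) ≫ X.iCycles n := by
      have := congrArg (fun t => t ≫ kernel.ι (X.homologyπ n) ≫ X.iCycles n) hτ
      simpa using this
    have hl : kernel.lift (X.homologyπ n) (X.toCycles (n + 1) n) (by simp) ≫
        kernel.ι (X.homologyπ n) ≫ X.iCycles n = X.d (n + 1) n := by simp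
    refine ⟨X.liftCycles
      (𝟙 _ - kernel.lift (X.homologyπ n) (X.toCycles (n + 1) n) (by simp) ≫ τ) n (by simp) ?_, ?_⟩
    · rw [Preadditive.sub_comp, Category.assoc, hτ', hl, Category.id_comp, sub_self]
    · rw [← cancel_mono (X.iCycles (n + 1))]
      have : X.iCycles (n + 1) ≫
          kernel.lift (X.homologyπ n) (X.toCycles (n + 1) n) (by simp) = 0 := by
        rw [← cancel_mono (kernel.ι (X.homologyπ n)), ← cancel_mono (X.iCycles n)]
        simp
      simp [reassoc_of% this]

/-- The key splitting lemma. -/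
theorem key (hC : HasMinimalCovers C) (X : ChainComplex C ℕ) (hcof : ∀ n : ℕ, Projective (X.X n))
    (hpd : ∀ n : ℕ, ProjDimLE1 (X.homology n))
    (hX : ∀ e : X ⟶ X, e ≫ e = e → e = 0 ∨ e = 𝟙 X) (n : ℕ) {A : C} (hA : ¬ IsZero A)
    (i : A ⟶ X.homology n) (r : X.homology n ⟶ A) (hir : i ≫ r = 𝟙 A) :
    r ≫ i = 𝟙 _ ∧ (∀ j, j ≠ n → j ≠ n + 1 → IsZero (X.X j)) ∧
    ∃ (P1 P0 : C) (dP : P1 ⟶ P0) (p : P0 ⟶ A), IsMinimalLen1Resolution dP p ∧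
      Nonempty (X ≅ suspN n (twoComplex dP)) := by
  obtain ⟨σ, hσ⟩ := cycles_split X hcof hpd n
  have hZ : Projective (X.cycles n) := by
    have := hcof n
    exact Retract.projective ⟨X.iCycles n, σ, hσ⟩
  obtain ⟨P0, p, hp⟩ := hC A
  obtain ⟨hP0, hpe, hmin⟩ := id hp
  have hApd : HasProjectiveDimensionLT A 2 := by
    have := hpd_of (hpd n)
    exact Retract.hasProjectiveDimensionLT ⟨i, r, hir⟩ 2
  have hP1 : Projective (kernel p) := ker_projective hApd p hP0
  obtain ⟨a, ha⟩ : ∃ a, a ≫ X.homologyπ n = p ≫ i :=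
    ⟨Projective.factorThru (p ≫ i) _, Projective.factorThru_comp _ _⟩
  obtain ⟨b, hb, hab⟩ : ∃ b, b ≫ p = X.homologyπ n ≫ r ∧ a ≫ b = 𝟙 _ := by
    obtain ⟨b, hb⟩ : ∃ b, b ≫ p = X.homologyπ n ≫ r :=
      ⟨Projective.factorThru (X.homologyπ n ≫ r) p, Projective.factorThru_comp _ _⟩
    have h1 : (a ≫ b) ≫ p = p := by
      rw [Category.assoc, hb, reassoc_of% ha, hir, Category.comp_id]
    have h2 := hmin _ h1
    refine ⟨b ≫ inv (a ≫ b), ?_, ?_⟩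
    · have : inv (a ≫ b) ≫ p = p := by rw [IsIso.inv_comp_eq, h1]
      rw [Category.assoc, this, hb]
    · rw [← Category.assoc, IsIso.hom_inv_id]
  have hex := ShortComplex.exact_of_g_is_cokernel
    (ShortComplex.mk (X.toCycles (n + 1) n) (X.homologyπ n) (by simp))
    (X.homologyIsCokernel (n + 1) n (by simp))
  obtain ⟨g, hg⟩ : ∃ g : kernel p ⟶ X.X (n + 1), g ≫ X.toCycles (n + 1) n = kernel.ι p ≫ a :=
    ⟨hex.liftFromProjective (kernel.ι p ≫ a) (by
      change (kernel.ι p ≫ a) ≫ X.homologyπ n = 0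
      rw [Category.assoc, ha, kernel.condition_assoc, zero_comp]),
      hex.liftFromProjective_comp _ _⟩
  obtain ⟨f, hf⟩ : ∃ f : X.X (n + 1) ⟶ kernel p, f ≫ kernel.ι p = X.toCycles (n + 1) n ≫ b :=
    ⟨kernel.lift p (X.toCycles (n + 1) n ≫ b) (by simp [hb]), by simp⟩
  have hgf : g ≫ f = 𝟙 _ := by
    rw [← cancel_mono (kernel.ι p), Category.assoc, hf, reassoc_of% hg, hab]; simp
  have hdσ : X.d (n + 1) n ≫ σ = X.toCycles (n + 1) n := by
    rw [← X.toCycles_i, Category.assoc, hσ, Category.comp_id]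
  obtain ⟨E, hE0, hE1, hEz⟩ := exists_endo X n (σ ≫ b ≫ a ≫ X.iCycles n) (f ≫ g)
    (by
      have : X.d (n + 2) (n + 1) ≫ f = 0 := by
        rw [← cancel_mono (kernel.ι p), Category.assoc, hf]; simp
      rw [reassoc_of% this, zero_comp])
    (by
      rw [reassoc_of% hdσ, ← X.toCycles_i (n + 1) n, Category.assoc, reassoc_of% hg,
        reassoc_of% hf])
    (by simp)
  have hEE : E ≫ E = E := by
    ext j
    by_cases h0 : j = n
    · subst h0
      simp [hE0, reassoc_of% hσ, reassoc_of% hab]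
    by_cases h1 : j = n + 1
    · subst h1
      simp [hE1, reassoc_of% hgf]
    simp [hEz j h0 h1]
  have hE : E = 𝟙 X := by
    refine (hX E hEE).resolve_left fun h => hA ?_
    rw [h] at hE0
    have hP : 𝟙 P0 = 0 := by
      have := congrArg (fun t => a ≫ X.iCycles n ≫ t ≫ σ ≫ b) hE0
      simpa [hσ, reassoc_of% hσ, reassoc_of% hab, hab] using this.symm
    rw [IsZero.iff_id_eq_zero, ← cancel_epi p, ← Category.id_comp p, hP]
    simp
  subst hE
  have hz : ∀ j, j ≠ n → j ≠ n + 1 → IsZero (X.X j) := by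
    intro j h0 h1
    rw [IsZero.iff_id_eq_zero]
    exact hEz j h0 h1
  have hE0' : σ ≫ b ≫ a ≫ X.iCycles n = 𝟙 _ := hE0.symm
  have hE1' : f ≫ g = 𝟙 _ := hE1.symm
  refine ⟨?_, hz, kernel p, P0, kernel.ι p, p, ⟨inferInstance, kernel.condition p, hp, ?_⟩, ?_⟩
  · have hba : b ≫ a = 𝟙 _ := by
      have := congrArg (fun t => X.iCycles n ≫ t ≫ σ) hE0'
      simpa [hσ, reassoc_of% hσ] using this
    rw [← cancel_epi (X.homologyπ n), ← reassoc_of% hb, ← ha, reassoc_of% hba, Category.comp_id]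
  · have : kernel.lift p (kernel.ι p) (kernel.condition p) = 𝟙 _ := by
      rw [← cancel_mono (kernel.ι p)]; simp
    rw [this]
    refine ⟨hP1, inferInstance, fun φ hφ => ?_⟩
    rw [Category.comp_id] at hφ
    rw [hφ]; infer_instance
  · obtain ⟨hz', a', b', w⟩ := suspN_spec (kernel.ι p) n
    refine iso_of_two n hz hz'
      ((⟨f, g, hE1', hgf⟩ : X.X (n + 1) ≅ kernel p) ≪≫ a'.symm)
      ((⟨σ ≫ b, a ≫ X.iCycles n, by simpa using hE0',
        by simp [reassoc_of% hσ, hab]⟩ : X.X n ≅ P0) ≪≫ b'.symm) ?_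
    have w' : a'.inv ≫ (suspN n (twoComplex (kernel.ι p))).d (n + 1) n =
        kernel.ι p ≫ b'.inv := by
      rw [Iso.inv_comp_eq, ← Category.assoc, w]; simp
    simp [w', reassoc_of% hf, reassoc_of% hdσ]

theorem indec_of_two_homology (X : ChainComplex C ℕ) (n : ℕ)
    (hH : Indecomposable (X.homology n)) {P1 P0 : C} (dP : P1 ⟶ P0) (p : P0 ⟶ X.homology n)
    (hres : IsMinimalLen1Resolution dP p) (iso : X ≅ suspN n (twoComplex dP)) :
    Indecomposable X := by
  rw [indec_iff_idem] at hH ⊢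
  obtain ⟨hnz, hidem⟩ := hH
  obtain ⟨hmono, hw, ⟨hP0, hpe, hmin⟩, -⟩ := hres
  have key1 : ∀ E : X ⟶ X, E ≫ E = E → HomologicalComplex.homologyMap E n = 𝟙 _ → E = 𝟙 X := by
    intro E hE hEH
    obtain ⟨hz', a', b', w⟩ := suspN_spec dP n
    let Ψ := fun j => HomologicalComplex.Hom.isoApp iso j
    have hz : ∀ j, j ≠ n → j ≠ n + 1 → IsZero (X.X j) := fun j h0 h1 =>
      (hz' j h0 h1).of_iso (Ψ j)
    let a := Ψ (n + 1) ≪≫ a'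
    let b := Ψ n ≪≫ b'
    have w1 : a.hom ≫ dP = X.d (n + 1) n ≫ b.hom := by
      simp [a, b, Ψ, w]
    have hEn : E.f n ≫ E.f n = E.f n := by rw [← HomologicalComplex.comp_f, hE]
    have hcyc : IsIso (X.iCycles n) := X.isIso_iCycles n _ rfl (by
      rcases n with _ | n
      · simp
      · exact (hz _ (by simp) (by simp; omega)).eq_of_tgt _ _)
    obtain ⟨u, hu⟩ : ∃ u, X.homologyπ n ≫ u = X.iCycles n ≫ b.hom ≫ p := by
      have hc := X.homologyIsCokernel (n + 1) n (by simp)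
      refine ⟨hc.desc (CokernelCofork.ofπ (X.iCycles n ≫ b.hom ≫ p) ?_), hc.fac _ .one⟩
      rw [X.toCycles_i_assoc, ← reassoc_of% w1, hw, comp_zero]
    have hEp : E.f n ≫ b.hom ≫ p = b.hom ≫ p := by
      rw [← cancel_epi (X.iCycles n), ← HomologicalComplex.cyclesMap_i_assoc, ← hu,
        ← HomologicalComplex.homologyπ_naturality_assoc, hEH, Category.id_comp]
    have h1 := hmin (b.inv ≫ E.f n ≫ b.hom) (by simp [hEp])
    have h2 : b.inv ≫ E.f n ≫ b.hom = 𝟙 _ :=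
      idem_iso_eq_id _ (by simp [reassoc_of% hEn]) h1
    have h3 : E.f n = 𝟙 _ := by
      have := congrArg (fun t => b.hom ≫ t ≫ b.inv) h2
      simpa using this
    refine hom_ext_two n hz h3 ?_
    have hm : Mono (X.d (n + 1) n) := by
      have : Mono (X.d (n + 1) n ≫ b.hom) := by rw [← w1]; infer_instance
      exact mono_of_mono _ b.hom
    rw [← cancel_mono (X.d (n + 1) n), E.comm, h3]
    simp
  refine ⟨fun h => hnz ((HomologicalComplex.homologyFunctor C _ n).map_isZero h), fun E hE => ?_⟩
  have hEH : HomologicalComplex.homologyMap E n ≫ HomologicalComplex.homologyMap E n =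
      HomologicalComplex.homologyMap E n := by
    rw [← HomologicalComplex.homologyMap_comp, hE]
  rcases hidem _ hEH with h | h
  · left
    have := key1 (𝟙 X - E) (by simp [hE]) (by
      rw [HomologicalComplex.homologyMap_sub, h]; simp)
    simpa using this
  · right
    exact key1 E hE h

theorem indec_of_disk (X : ChainComplex C ℕ) (n : ℕ) (Y : C) (hY : Indecomposable Y)
    (iso : X ≅ disk n Y) : Indecomposable X := by
  rw [indec_iff_idem] at hY ⊢
  obtain ⟨hnz, hidem⟩ := hY
  let Ψ := fun j => HomologicalComplex.Hom.isoApp iso j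
  obtain ⟨t⟩ := disk_iso_top n Y
  let b := Ψ n ≪≫ t
  refine ⟨fun h => hnz ?_, fun E hE => ?_⟩
  · exact ((HomologicalComplex.eval C _ n).map_isZero h).of_iso b.symm
  have hEn : E.f n ≫ E.f n = E.f n := by rw [← HomologicalComplex.comp_f, hE]
  have hz : ∀ j, j ≠ n → j + 1 ≠ n → IsZero (X.X j) := fun j h0 h1 =>
      (disk_zero n Y j h0 h1).of_iso (Ψ j)
  have key1 : ∀ F : X ⟶ X, E.f n = F.f n → E = F := by
    intro F h
    rcases n with _ | n
    · ext j
      by_cases hj : j = 0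
      · subst hj; exact h
      · exact (hz j hj (by omega)).eq_of_src _ _
    · refine hom_ext_two n (fun j h0 h1 => hz j h1 (by omega)) ?_ h
      obtain ⟨a', b', w⟩ := disk_iso n Y
      have hd : X.d (n + 1) n ≫ (Ψ n ≪≫ b').hom = (Ψ (n + 1) ≪≫ a').hom := by
        simp [Ψ, ← w]
      have : Epi (X.d (n + 1) n) := by
        have h' : X.d (n + 1) n = (Ψ (n + 1) ≪≫ a').hom ≫ (Ψ n ≪≫ b').inv := by
          rw [Iso.eq_comp_inv, hd]
        rw [h']; infer_instance
      rw [← cancel_epi (X.d (n + 1) n), ← E.comm, ← F.comm, h]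
  rcases hidem (b.inv ≫ E.f n ≫ b.hom) (by simp [reassoc_of% hEn]) with h | h
  · left
    apply key1
    have := congrArg (fun t => b.hom ≫ t ≫ b.inv) h
    simpa using this
  · right
    apply key1
    have := congrArg (fun t => b.hom ≫ t ≫ b.inv) h
    simpa using this

theorem acyclic_case (X : ChainComplex C ℕ) (hcof : ∀ n : ℕ, Projective (X.X n))
    (hnz : ¬ IsZero X)
    (hX : ∀ e : X ⟶ X, e ≫ e = e → e = 0 ∨ e = 𝟙 X) (hH : ∀ n, IsZero (X.homology n)) :
    ∃ (n : ℕ) (Y : C), Indecomposable Y ∧ Projective Y ∧ Nonempty (X ≅ disk n Y) := by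
  classical
  have hex : ∃ n, ¬ IsZero (X.X n) := by
    by_contra hcon
    push Not at hcon
    apply hnz
    rw [IsZero.iff_id_eq_zero]
    ext j
    exact (hcon j).eq_of_src _ _
  obtain ⟨n, hn, hlt⟩ : ∃ n, ¬ IsZero (X.X n) ∧ ∀ m < n, IsZero (X.X m) :=
    ⟨Nat.find hex, Nat.find_spec hex, fun m hm => by simpa using Nat.find_min hex hm⟩
  have hd0 : ∀ j, X.d n j = 0 := by
    intro j
    by_cases hj : j + 1 = n
    · exact (hlt j (by omega)).eq_of_tgt _ _
    · exact X.shape _ _ hj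
  have hepi : Epi (X.d (n + 1) n) := by
    have := (X.exactAt_iff' (n + 1) n ((ComplexShape.down ℕ).next n) (by simp) rfl).1
      ((X.exactAt_iff_isZero_homology n).2 (hH n))
    exact this.epi_f (hd0 _)
  have := hcof n
  obtain ⟨s, hs⟩ : ∃ s, s ≫ X.d (n + 1) n = 𝟙 _ :=
    ⟨Projective.factorThru (𝟙 _) _, Projective.factorThru_comp _ _⟩
  obtain ⟨E, hE0, hE1, hEz⟩ := exists_endo X n (𝟙 _) (X.d (n + 1) n ≫ s)
    (by simp) (by simp [hs]) (by simp [hd0])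
  have hEE : E ≫ E = E := by
    ext j
    by_cases h0 : j = n
    · subst h0
      simp [hE0]
    by_cases h1 : j = n + 1
    · subst h1
      simp [hE1, reassoc_of% hs]
    simp [hEz j h0 h1]
  have hE : E = 𝟙 X := by
    refine (hX E hEE).resolve_left fun h => hn ?_
    rw [h] at hE0
    rw [IsZero.iff_id_eq_zero, ← hE0]
    rfl
  subst hE
  have hz : ∀ j, j ≠ n → j ≠ n + 1 → IsZero (X.X j) := by
    intro j h0 h1
    rw [IsZero.iff_id_eq_zero]
    exact hEz j h0 h1
  have hds : X.d (n + 1) n ≫ s = 𝟙 _ := hE1.symm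
  refine ⟨n + 1, X.X n, ?_, hcof n, ?_⟩
  · rw [indec_iff_idem]
    refine ⟨hn, fun e he => ?_⟩
    obtain ⟨F, hF0, hF1, hFz⟩ := exists_endo X n e (X.d (n + 1) n ≫ e ≫ s)
      (by simp) (by simp [hs]) (by simp [hd0])
    have hFF : F ≫ F = F := by
      refine hom_ext_two n hz ?_ ?_
      · simp [hF0, he]
      · simp [hF1, reassoc_of% hs, reassoc_of% he]
    rcases hX F hFF with h | h
    · left; rw [← hF0, h]; rfl
    · right; rw [← hF0, h]; rfl
  · obtain ⟨a', b', w⟩ := disk_iso n (X.X n)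
    refine iso_of_two n hz (fun j h0 h1 => disk_zero _ _ _ h1 (by omega))
      ((⟨X.d (n + 1) n, s, hds, hs⟩ : X.X (n + 1) ≅ X.X n) ≪≫ a'.symm) b'.symm ?_
    have w' : a'.inv ≫ (disk (n + 1) (X.X n)).d (n + 1) n = b'.inv := by
      rw [Iso.inv_comp_eq, ← w]; simp
    simp [w']

/-- **Statement 6.**  Let `C` be an abelian category satisfying the minimal cover axiom,
and `X` a non-negative chain complex with `X n` projective and `H_n(X)` of projective
dimension at most 1 for every `n`.  Then `X` is indecomposable if, and only if, either
(i) all homology of `X` vanishes, in which case `X ≅ Dⁿ(Y)` for some `n` and some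
indecomposable projective `Y`; or (ii) the homology of `X` is nonzero in exactly one
degree `n`, in which case `H_n(X)` is indecomposable and `X ≅ Sⁿ(P)` for `P` the minimal
projective resolution of `H_n(X)`. -/
theorem indecomposable_cofibrant_characterization
    (hC : HasMinimalCovers C)
    (X : ChainComplex C ℕ) (hcof : ∀ n : ℕ, Projective (X.X n))
    (hpd : ∀ n : ℕ, ProjDimLE1 (X.homology n)) :
    Indecomposable X ↔
      ((∀ n : ℕ, IsZero (X.homology n)) ∧
        ∃ (n : ℕ) (Y : C), Indecomposable Y ∧ Projective Y ∧
          Nonempty (X ≅ disk n Y)) ∨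
      (∃ n : ℕ, ¬ IsZero (X.homology n) ∧ (∀ m : ℕ, m ≠ n → IsZero (X.homology m)) ∧
        Indecomposable (X.homology n) ∧
        ∃ (P1 P0 : C) (dP : P1 ⟶ P0) (p : P0 ⟶ X.homology n),
          IsMinimalLen1Resolution dP p ∧
          Nonempty (X ≅ suspN n (twoComplex dP))) := by
  constructor
  · intro h
    rw [indec_iff_idem] at h
    obtain ⟨hnz, hX⟩ := h
    by_cases hH : ∀ n, IsZero (X.homology n)
    · exact Or.inl ⟨hH, acyclic_case X hcof hnz hX hH⟩
    · right
      push Not at hH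
      obtain ⟨n, hn⟩ := hH
      have hX0 : ∀ m, ¬ IsZero (X.homology m) → ¬ IsZero (X.X m) := fun m hm h =>
        hm (HomologicalComplex.ExactAt.of_isZero h).isZero_homology
      obtain ⟨-, hz, hres⟩ := key hC X hcof hpd hX n hn (𝟙 _) (𝟙 _) (by simp)
      refine ⟨n, hn, fun m hmn => ?_, ?_, hres⟩
      · by_contra hm
        obtain ⟨-, hz', -⟩ := key hC X hcof hpd hX m hm (𝟙 _) (𝟙 _) (by simp)
        have h1 : m = n + 1 := by
          by_contra hne
          exact hX0 m hm (hz m hmn hne)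
        exact hX0 n hn (hz' n (by omega) (by omega))
      · rw [indec_iff_idem]
        refine ⟨hn, fun e he => ?_⟩
        obtain ⟨A, i, r, hir, hri⟩ := IsIdempotentComplete.idempotents_split _ e he
        by_cases hA : IsZero A
        · left; rw [← hri, hA.eq_of_tgt r 0, zero_comp]
        · right; rw [← hri]
          exact (key hC X hcof hpd hX n hA i r hir).1
  · rintro (⟨-, n, Y, hY, -, ⟨iso⟩⟩ | ⟨n, -, -, hH, P1, P0, dP, p, hres, ⟨iso⟩⟩)
    · exact indec_of_disk X n Y hY iso
    · exact indec_of_two_homology X n hH dP p hres iso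
end

section
/- Let C be an abelian category with enough projectives and let D be a finite poset of dimension at most 1. If every object of C has projective dimension at most n, then every functor X : D → C has projective dimension at most n + 1 in the functor category Fun(D, C); that is, the projective dimension of Fun(D, C) is at most the projective dimension of C plus 1. -/
open CategoryTheory CategoryTheory.Limits

universe v u

/-- A poset has dimension at most 1 if whenever `w ≤ u ≤ x` and `w ≤ v ≤ x`, the elements
`u` and `v` are comparable. -/
def PosetDimLE1 (P : Type*) [Preorder P] : Prop :=
  ∀ ⦃w u v x : P⦄, w ≤ u → u ≤ x → w ≤ v → v ≤ x → u ≤ v ∨ v ≤ u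

/-- An object has projective dimension at most `n` if it admits a projective resolution of
length at most `n`, i.e. one which vanishes in all degrees `k > n`. -/
def ProjDimLE {E : Type*} [Category E] [HasZeroObject E] [HasZeroMorphisms E]
    (n : ℕ) (A : E) : Prop :=
  ∃ R : ProjectiveResolution A, ∀ k : ℕ, n < k → IsZero (R.complex.X k)


namespace PDFun

open Abelian

section General

variable {E : Type*} [Category E] [Abelian E]

lemma hasPD_of_projDimLE {n : ℕ} {A : E} (h : ProjDimLE n A) : HasProjectiveDimensionLE A n := by
  obtain ⟨R, hR⟩ := h
  let := HasExt.standard E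
  rw [HasProjectiveDimensionLE, hasProjectiveDimensionLT_iff]
  intro i hi Y e
  obtain ⟨f, hf, rfl⟩ := R.extMk_surjective e (i + 1) rfl
  obtain rfl : f = 0 := (hR i (by omega)).eq_of_src _ _
  simp

lemma augment_exactAt_succ {K P : E} (Q : ChainComplex E ℕ) (q : Q.X 0 ⟶ K)
    (hq : Q.d 1 0 ≫ q = 0) (hex : (ShortComplex.mk _ _ hq).Exact)
    (hQ : ∀ n, Q.ExactAt (n + 1)) (i : K ⟶ P) [Mono i]
    (w : Q.d 1 0 ≫ (q ≫ i) = 0) (n : ℕ) :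
    (Q.augment (q ≫ i) w).ExactAt (n + 1) := by
  rw [HomologicalComplex.exactAt_iff' _ (n + 1 + 1) (n + 1) n (by simp) (by simp)]
  obtain _ | n := n
  · have h : (ShortComplex.mk _ _ w).Exact := by
      let α : ShortComplex.mk _ _ hq ⟶ ShortComplex.mk _ _ w :=
        { τ₁ := 𝟙 _
          τ₂ := 𝟙 _
          τ₃ := i }
      have : Epi α.τ₁ := inferInstanceAs (Epi (𝟙 _))
      have : IsIso α.τ₂ := inferInstanceAs (IsIso (𝟙 _))
      have : Mono α.τ₃ := inferInstanceAs (Mono i)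
      exact (ShortComplex.exact_iff_of_epi_of_isIso_of_mono α).1 hex
    exact h
  · exact ((HomologicalComplex.exactAt_iff' _ (n + 2) (n + 1) n) (by simp) (by simp)).1 (hQ n)

lemma resolution_augmentation {K : E} (R : ProjectiveResolution K) :
    ∃ (q : R.complex.X 0 ⟶ K) (hq : R.complex.d 1 0 ≫ q = 0),
      (ShortComplex.mk _ _ hq).Exact ∧ Epi q :=
  ⟨R.π.f 0, R.complex_d_comp_π_f_zero,
    (ShortComplex.mk _ _ R.complex_d_comp_π_f_zero).exact_of_g_is_cokernel
      R.isColimitCokernelCofork, inferInstanceAs (Epi (R.π.f 0))⟩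

/-- A resolution from an exact augmented complex of projectives. -/
lemma exists_resolution {X : E} (Q : ChainComplex E ℕ) (hP : ∀ n, Projective (Q.X n))
    (p : Q.X 0 ⟶ X) (hp : Epi p) (w : Q.d 1 0 ≫ p = 0) (hex : (ShortComplex.mk _ _ w).Exact)
    (hQ : ∀ n, Q.ExactAt (n + 1)) :
    ∃ R : ProjectiveResolution X, R.complex = Q := by
  refine ⟨{ complex := Q
            projective := hP
            π := (ChainComplex.toSingle₀Equiv _ _).symm ⟨p, w⟩
            quasiIso := ⟨fun k => ?_⟩ }, rfl⟩
  cases k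
  · rw [ChainComplex.quasiIsoAt₀_iff, ShortComplex.quasiIso_iff_of_zeros']
    · refine (ShortComplex.exact_and_epi_g_iff_of_iso ?_).2 ⟨hex, hp⟩
      exact ShortComplex.isoMk (Iso.refl _) (Iso.refl _) (Iso.refl _)
        ((Category.id_comp (Q.d 1 0)).trans (Category.comp_id (Q.d 1 0)).symm)
        (by
          erw [Category.id_comp, Category.comp_id]
          simp
          rfl)
    · exact Q.shape 0 0 (by simp)
    all_goals rfl
  · rw [quasiIsoAt_iff_exactAt']
    · exact hQ _
    · apply ChainComplex.exactAt_succ_single_obj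

lemma projDimLE_succ {n : ℕ} {X K P : E} [Projective P] (i : K ⟶ P) (p : P ⟶ X)
    (w : i ≫ p = 0) (hS : (ShortComplex.mk i p w).ShortExact) (h : ProjDimLE n K) :
    ProjDimLE (n + 1) X := by
  obtain ⟨R, hR⟩ := h
  have hi : Mono i := hS.mono_f
  have hp : Epi p := hS.epi_g
  obtain ⟨q, hq, hqe, hqepi⟩ := resolution_augmentation R
  have w0 : R.complex.d 1 0 ≫ (q ≫ i) = 0 := by
    rw [← Category.assoc, hq, zero_comp]
  have w1 : (q ≫ i) ≫ p = 0 := by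
    rw [Category.assoc, w, comp_zero]
  have hex : (ShortComplex.mk (q ≫ i) p w1).Exact := by
    let α : ShortComplex.mk (q ≫ i) p w1 ⟶ ShortComplex.mk i p w :=
      { τ₁ := q
        τ₂ := 𝟙 _
        τ₃ := 𝟙 _ }
    have : Epi α.τ₁ := hqepi
    have : IsIso α.τ₂ := inferInstanceAs (IsIso (𝟙 _))
    have : Mono α.τ₃ := inferInstanceAs (Mono (𝟙 _))
    exact (ShortComplex.exact_iff_of_epi_of_isIso_of_mono α).2 hS.exact
  obtain ⟨R', hR'⟩ := exists_resolution (X := X) (R.complex.augment (q ≫ i) w0)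
    (by
      rintro (_ | k)
      · assumption
      · exact R.projective k) p hp w1 hex
    (augment_exactAt_succ R.complex q hq hqe R.complex_exactAt_succ i w0)
  refine ⟨R', ?_⟩
  rw [hR']
  rintro (_ | k) hk
  · omega
  · exact hR k (by omega)

lemma projDimLE_of_hasPD [EnoughProjectives E] (n : ℕ) (A : E)
    (h : HasProjectiveDimensionLE A n) : ProjDimLE n A := by
  induction n generalizing A with
  | zero =>
    have : Projective A := projective_iff_hasProjectiveDimensionLT_one.2 h
    refine ⟨ProjectiveResolution.self A, fun k hk => ?_⟩
    apply HomologicalComplex.isZero_single_obj_X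
    omega
  | succ n ih =>
    have hS : (ShortComplex.mk _ _ (kernel.condition (Projective.π A))).ShortExact :=
      { exact := ShortComplex.exact_kernel _ }
    exact projDimLE_succ _ _ _ hS
      (ih _ ((hS.hasProjectiveDimensionLT_X₃_iff n (Projective.projective_over A)).1 h))

end General

section Exactness

variable {T : Type*} [Category T] {C : Type*} [Category C] [Abelian C]

lemma shortExact_of_eval (S : ShortComplex (T ⥤ C))
    (h : ∀ t, (S.map ((evaluation T C).obj t)).ShortExact) : S.ShortExact := by
  have : Mono S.f := by
    rw [NatTrans.mono_iff_mono_app]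
    exact fun t => (h t).mono_f
  have : Epi S.g := by
    rw [NatTrans.epi_iff_epi_app]
    exact fun t => (h t).epi_g
  refine ⟨?_⟩
  rw [ShortComplex.exact_iff_isZero_homology, Functor.isZero_iff]
  intro t
  exact ((ShortComplex.exact_iff_isZero_homology _).1 (h t).exact).of_iso
    (S.mapHomologyIso ((evaluation T C).obj t)).symm

end Exactness

section Indicator

open ZeroObject

variable {C : Type u} [Category.{v} C] [Abelian C]

/-- `A` if the boolean is true, and zero otherwise. -/
noncomputable def cut (A : C) : Bool → C
  | true => A
  | false => 0

/-- Transition maps. -/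
noncomputable def tr (A : C) : (b c : Bool) → (cut A b ⟶ cut A c)
  | true, true => 𝟙 A
  | false, _ => 0
  | true, false => 0

/-- Functoriality of `cut`. -/
noncomputable def cutMap {A B : C} (f : A ⟶ B) : (b : Bool) → (cut A b ⟶ cut B b)
  | true => f
  | false => 0

lemma cut_isZero (A : C) {b : Bool} (h : b = false) : IsZero (cut A b) := by
  subst h; exact isZero_zero C

lemma tr_id (A : C) (b : Bool) : tr A b b = 𝟙 _ := by
  cases b
  · exact (cut_isZero A rfl).eq_of_src _ _
  · rfl

lemma tr_comp (A : C) (a b c : Bool) (h : a = true → c = true → b = true) :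
    tr A a b ≫ tr A b c = tr A a c := by
  cases a
  · exact (cut_isZero A rfl).eq_of_src _ _
  cases c
  · exact (cut_isZero A rfl).eq_of_tgt _ _
  obtain rfl := h rfl rfl
  exact Category.id_comp _

lemma tr_cutMap {A B : C} (f : A ⟶ B) (a b : Bool) :
    tr A a b ≫ cutMap f b = cutMap f a ≫ tr B a b := by
  cases a
  · exact (cut_isZero A rfl).eq_of_src _ _
  cases b
  · exact (cut_isZero B rfl).eq_of_tgt _ _
  exact (Category.id_comp _).trans (Category.comp_id _).symm

variable {D : Type} [PartialOrder D]

/-- Order-convexity of a boolean predicate. -/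
def Cvx (U : D → Bool) : Prop :=
  ∀ ⦃a b c : D⦄, a ≤ b → b ≤ c → U a = true → U c = true → U b = true

/-- The functor which is `A` on the convex set `U` and zero elsewhere. -/
noncomputable def ind (U : D → Bool) (hU : Cvx U) (A : C) : D ⥤ C where
  obj e := cut A (U e)
  map {e e'} _ := tr A (U e) (U e')
  map_id _ := tr_id A _
  map_comp f g := (tr_comp A _ _ _ (hU (leOfHom f) (leOfHom g))).symm

/-- Functoriality of the indicator functor. -/
noncomputable def indMap (U : D → Bool) (hU : Cvx U) {A B : C} (f : A ⟶ B) :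
    ind U hU A ⟶ ind U hU B where
  app e := cutMap f (U e)
  naturality _ _ _ := tr_cutMap f _ _

/-- The natural map between indicator functors of compatible sets. -/
noncomputable def indTr (U V : D → Bool) (hU : Cvx U) (hV : Cvx V)
    (h : ∀ a b, a ≤ b → U a = true → V b = true → U b = true ∧ V a = true) (A : C) :
    ind U hU A ⟶ ind V hV A where
  app e := tr A (U e) (V e)
  naturality a b f := by
    have := h a b (leOfHom f)
    exact (tr_comp A _ _ _ (fun x y => (this x y).1)).trans
      (tr_comp A _ _ _ (fun x y => (this x y).2)).symm

lemma shortExact_of_isZero (S : ShortComplex C) (h₁ : IsZero S.X₁) (h₂ : IsZero S.X₂)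
    (h₃ : IsZero S.X₃) : S.ShortExact := by
  have : Mono S.f := ⟨fun _ _ _ => h₁.eq_of_tgt _ _⟩
  have : Epi S.g := ⟨fun _ _ _ => h₃.eq_of_src _ _⟩
  exact ⟨ShortComplex.exact_of_isZero_X₂ _ h₂⟩

lemma cutMap_comp {X Y Z : C} (f : X ⟶ Y) (g : Y ⟶ Z) (h : f ≫ g = 0) (b : Bool) :
    cutMap f b ≫ cutMap g b = 0 := by
  cases b
  · exact (cut_isZero _ rfl).eq_of_src _ _
  · exact h

lemma cut_shortExact {S : ShortComplex C} (hS : S.ShortExact) (b : Bool) :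
    (ShortComplex.mk _ _ (cutMap_comp S.f S.g S.zero b)).ShortExact := by
  cases b
  · exact shortExact_of_isZero _ (cut_isZero S.X₁ rfl) (cut_isZero S.X₂ rfl) (cut_isZero S.X₃ rfl)
  · exact hS

lemma indMap_comp (U : D → Bool) (hU : Cvx U) {X Y Z : C} (f : X ⟶ Y) (g : Y ⟶ Z)
    (h : f ≫ g = 0) : indMap U hU f ≫ indMap U hU g = 0 := by
  ext e
  exact cutMap_comp f g h _

lemma ind_shortExact (U : D → Bool) (hU : Cvx U) {S : ShortComplex C} (hS : S.ShortExact) :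
    (ShortComplex.mk _ _ (indMap_comp U hU S.f S.g S.zero)).ShortExact :=
  shortExact_of_eval _ fun t => cut_shortExact hS (U t)

lemma tr_ss_zero (A : C) (a b c : Bool) (hac : ¬ (a = true ∧ c = true)) :
    tr A a b ≫ tr A b c = 0 := by
  cases a
  · exact (cut_isZero A rfl).eq_of_src _ _
  cases c
  · exact (cut_isZero A rfl).eq_of_tgt _ _
  exact absurd ⟨rfl, rfl⟩ hac

/-- `b` is the disjoint union of `a` and `c`. -/
lemma tr_shortExact (A : C) (a b c : Bool) (hac : ¬ (a = true ∧ c = true))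
    (hb : b = (a || c)) :
    (ShortComplex.mk _ _ (tr_ss_zero A a b c hac)).ShortExact := by
  subst hb
  cases a <;> cases c
  · exact shortExact_of_isZero _ (cut_isZero A rfl) (cut_isZero A rfl) (cut_isZero A rfl)
  · have : Mono (tr A false (false || true)) := ⟨fun _ _ _ => (cut_isZero A rfl).eq_of_tgt _ _⟩
    have : IsIso (tr A (false || true) true) := inferInstanceAs (IsIso (𝟙 A))
    refine ⟨?_⟩
    exact (ShortComplex.exact_iff_mono _ ((cut_isZero A rfl).eq_of_src _ _)).2 inferInstance
  · have : Epi (tr A (true || false) false) := ⟨fun _ _ _ => (cut_isZero A rfl).eq_of_src _ _⟩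
    have : IsIso (tr A true (true || false)) := inferInstanceAs (IsIso (𝟙 A))
    refine ⟨?_⟩
    exact (ShortComplex.exact_iff_epi _ ((cut_isZero A rfl).eq_of_tgt _ _)).2 inferInstance
  · exact absurd ⟨rfl, rfl⟩ hac

/-- Map out of a cut. -/
noncomputable def cutDesc {A B : C} : (b : Bool) → (b = true → (A ⟶ B)) → (cut A b ⟶ B)
  | true, g => g rfl
  | false, _ => 0

/-- The tautological map into a cut. -/
noncomputable def ptc (A : C) : (b : Bool) → (A ⟶ cut A b)
  | true => 𝟙 A
  | false => 0

lemma ptc_tr (A : C) (a b : Bool) (ha : a = true) : ptc A a ≫ tr A a b = ptc A b := by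
  subst ha
  cases b
  · exact (cut_isZero A rfl).eq_of_tgt _ _
  · exact Category.id_comp _

lemma cut_cases (A : C) {b : Bool} {Z : C} (f g : cut A b ⟶ Z)
    (h : b = true → ptc A b ≫ f = ptc A b ≫ g) : f = g := by
  cases b
  · exact (cut_isZero A rfl).eq_of_src _ _
  · exact ((Category.id_comp f).symm.trans (h rfl)).trans (Category.id_comp g)

lemma ptc_cutDesc {A B : C} (b : Bool) (g : b = true → (A ⟶ B)) (hb : b = true) :
    ptc A b ≫ cutDesc b g = g hb := by
  subst hb
  exact Category.id_comp _

lemma ptc_tr_cutDesc {A B : C} (a b : Bool) (g : b = true → (A ⟶ B)) (ha : a = true)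
    (hb : b = true) :
    ptc A a ≫ tr A a b ≫ cutDesc b g = g hb := by
  rw [← Category.assoc, ptc_tr _ _ _ ha, ptc_cutDesc]

/-- Map out of an indicator functor of an upper set. -/
noncomputable def indDesc (U : D → Bool) (hU : Cvx U)
    (hup : ∀ a b, a ≤ b → U a = true → U b = true) {A : C} {Z : D ⥤ C}
    (g : ∀ e, U e = true → (A ⟶ Z.obj e))
    (hg : ∀ a b (h : a ≤ b) (ha : U a = true),
      g a ha ≫ Z.map (homOfLE h) = g b (hup a b h ha)) : ind U hU A ⟶ Z where
  app e := cutDesc (U e) (g e)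
  naturality a b f := by
    apply cut_cases
    intro ha
    have h1 := ptc_tr_cutDesc (U a) (U b) (g b) ha (hup a b (leOfHom f) ha)
    have h2 := ptc_cutDesc (U a) (g a) ha
    refine h1.trans ?_
    refine ((hg a b (leOfHom f) ha).symm.trans ?_).trans (Category.assoc _ _ _)
    rw [h2]
    rfl

/-- The tautological map at a point of the set. -/
noncomputable def ptMap (U : D → Bool) (hU : Cvx U) (A : C) (e : D) :
    A ⟶ (ind U hU A).obj e := ptc A (U e)

lemma ptMap_map (U : D → Bool) (hU : Cvx U) (A : C) {a b : D} (f : a ⟶ b) (ha : U a = true) :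
    ptMap U hU A a ≫ (ind U hU A).map f = ptMap U hU A b :=
  ptc_tr A _ _ ha

lemma ptMap_indDesc (U : D → Bool) (hU : Cvx U)
    (hup : ∀ a b, a ≤ b → U a = true → U b = true) {A : C} {Z : D ⥤ C}
    (g : ∀ e, U e = true → (A ⟶ Z.obj e))
    (hg : ∀ a b (h : a ≤ b) (ha : U a = true),
      g a ha ≫ Z.map (homOfLE h) = g b (hup a b h ha)) (e : D) (he : U e = true) :
    ptMap U hU A e ≫ (indDesc U hU hup g hg).app e = g e he :=
  ptc_cutDesc (U e) (g e) he

lemma ind_hom_ext (U : D → Bool) (hU : Cvx U) {A : C} {Z : D ⥤ C} (f g : ind U hU A ⟶ Z)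
    (h : ∀ e, U e = true → ptMap U hU A e ≫ f.app e = ptMap U hU A e ≫ g.app e) : f = g := by
  ext e
  exact cut_cases A _ _ (h e)

lemma ind_projective (U : D → Bool) (hU : Cvx U)
    (hup : ∀ a b, a ≤ b → U a = true → U b = true)
    (m : D → D) (hmU : ∀ e, U e = true → U (m e) = true)
    (hme : ∀ e, U e = true → m e ≤ e)
    (hmm : ∀ a b, a ≤ b → U a = true → m a = m b) (P : C) [Projective P] :
    Projective (ind U hU P) := by
  refine ⟨fun {Y Z} f p hp => ?_⟩
  have hpe : ∀ e, Epi (p.app e) := (NatTrans.epi_iff_epi_app p).1 hp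
  have key : ∀ e, ∃ l : P ⟶ Y.obj e, l ≫ p.app e = ptMap U hU P e ≫ f.app e := fun e =>
    ⟨Projective.factorThru _ (p.app e), Projective.factorThru_comp _ _⟩
  choose l hl using key
  have hle : ∀ a b (h : a ≤ b) (ha : U a = true) (k : D) (hk : k = m b) (hka : k ≤ a),
      (l k ≫ Y.map (homOfLE hka)) ≫ Y.map (homOfLE h) =
        l (m b) ≫ Y.map (homOfLE (hme b (hup a b h ha))) := by
    rintro a b h ha k rfl hka
    rw [Category.assoc, ← Y.map_comp]
    rfl
  refine ⟨indDesc U hU hup (fun e he => l (m e) ≫ Y.map (homOfLE (hme e he)))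
    (fun a b h ha => hle a b h ha _ (hmm a b h ha) _), ?_⟩
  apply ind_hom_ext
  intro e he
  rw [NatTrans.comp_app, ← Category.assoc, ptMap_indDesc _ _ _ _ _ _ he, Category.assoc,
    p.naturality, ← Category.assoc, hl, Category.assoc, ← f.naturality, ← Category.assoc,
    ptMap_map _ _ _ _ (hmU e he)]

end Indicator

section Main

open ZeroObject

variable {C : Type u} [Category.{v} C] [Abelian C] [EnoughProjectives C]
variable {D : Type} [PartialOrder D]

lemma ind_pd (U : D → Bool) (hU : Cvx U)
    (hup : ∀ a b, a ≤ b → U a = true → U b = true)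
    (m : D → D) (hmU : ∀ e, U e = true → U (m e) = true)
    (hme : ∀ e, U e = true → m e ≤ e)
    (hmm : ∀ a b, a ≤ b → U a = true → m a = m b) (n : ℕ) (A : C)
    (hA : HasProjectiveDimensionLT A (n + 1)) :
    HasProjectiveDimensionLT (ind U hU A) (n + 1) := by
  induction n generalizing A with
  | zero =>
    have : Projective A := projective_iff_hasProjectiveDimensionLT_one.2 hA
    exact projective_iff_hasProjectiveDimensionLT_one.1
      (ind_projective U hU hup m hmU hme hmm A)
  | succ n ih =>
    have hS : (ShortComplex.mk _ _ (kernel.condition (Projective.π A))).ShortExact :=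
      { exact := ShortComplex.exact_kernel _ }
    have hK := (hS.hasProjectiveDimensionLT_X₃_iff n (Projective.projective_over A)).1 hA
    have hP : Projective (ind U hU (Projective.over A)) :=
      ind_projective U hU hup m hmU hme hmm _
    exact ((ind_shortExact U hU hS).hasProjectiveDimensionLT_X₃_iff n hP).2 (ih _ hK)

open Classical in
/-- The set of elements above `d`. -/
noncomputable def upSet (d : D) : D → Bool := fun e => decide (d ≤ e)

open Classical in
/-- The set of elements strictly above `d`. -/
noncomputable def supSet (d : D) : D → Bool := fun e => decide (d < e)

open Classical in
/-- The singleton set. -/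
noncomputable def ptSet (d : D) : D → Bool := fun e => decide (e = d)

lemma upSet_iff (d e : D) : upSet d e = true ↔ d ≤ e := by simp [upSet]

lemma supSet_iff (d e : D) : supSet d e = true ↔ d < e := by simp [supSet]

lemma ptSet_iff (d e : D) : ptSet d e = true ↔ e = d := by simp [ptSet]

lemma upSet_up (d a b : D) (h : a ≤ b) (ha : upSet d a = true) : upSet d b = true := by
  rw [upSet_iff] at *
  exact ha.trans h

lemma supSet_up (d a b : D) (h : a ≤ b) (ha : supSet d a = true) : supSet d b = true := by
  rw [supSet_iff] at *
  exact ha.trans_le h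

lemma upSet_cvx (d : D) : Cvx (upSet d) := fun _ _ _ h _ ha _ => upSet_up d _ _ h ha

lemma supSet_cvx (d : D) : Cvx (supSet d) := fun _ _ _ h _ ha _ => supSet_up d _ _ h ha

lemma ptSet_cvx (d : D) : Cvx (ptSet d) := by
  intro a b c h h' ha hc
  rw [ptSet_iff] at *
  subst ha hc
  exact le_antisymm h' h

lemma ind_sup_up_pt_zero (d : D) (A : C)
    (h : ∀ a b, a ≤ b → supSet d a = true → upSet d b = true →
      supSet d b = true ∧ upSet d a = true)
    (h' : ∀ a b, a ≤ b → upSet d a = true → ptSet d b = true →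
      upSet d b = true ∧ ptSet d a = true) :
    indTr (supSet d) (upSet d) (supSet_cvx d) (upSet_cvx d) h A ≫
      indTr (upSet d) (ptSet d) (upSet_cvx d) (ptSet_cvx d) h' A = 0 := by
  ext e
  refine tr_ss_zero A _ _ _ ?_
  rw [supSet_iff, ptSet_iff]
  rintro ⟨h, rfl⟩
  exact lt_irrefl _ h

/-- A choice function for the minimal elements strictly above `d`. -/
lemma exists_min [Finite D] (hdim : PosetDimLE1 D) (d : D) :
    ∃ m : D → D, (∀ e, d < e → d < m e) ∧ (∀ e, d < e → m e ≤ e) ∧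
      ∀ a b, a ≤ b → d < a → m a = m b := by
  have key : ∀ e, ∃ x, d < e → (d < x ∧ x ≤ e ∧ ∀ y, d < y → y ≤ x → y = x) := by
    intro e
    by_cases he : d < e
    · obtain ⟨x, hxe, hx⟩ := (Set.toFinite {y : D | d < y}).exists_le_minimal he
      exact ⟨x, fun _ => ⟨hx.prop, hxe, fun y hy hyx => le_antisymm hyx (hx.le_of_le hy hyx)⟩⟩
    · exact ⟨e, fun h => absurd h he⟩
  choose m hm using key
  refine ⟨m, fun e he => (hm e he).1, fun e he => (hm e he).2.1, fun a b hab ha => ?_⟩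
  obtain ⟨h1, h2, h3⟩ := hm a ha
  obtain ⟨k1, k2, k3⟩ := hm b (ha.trans_le hab)
  rcases hdim h1.le (h2.trans hab) k1.le k2 with h | h
  · exact k3 _ h1 h
  · exact (h3 _ k1 h).symm

lemma up_pd (d : D) (n : ℕ) (A : C) (hA : HasProjectiveDimensionLT A (n + 1)) :
    HasProjectiveDimensionLT (ind (upSet d) (upSet_cvx d) A) (n + 1) :=
  ind_pd (upSet d) (upSet_cvx d) (upSet_up d) (fun _ => d) (fun _ _ => (upSet_iff d d).2 le_rfl)
    (fun e he => (upSet_iff d e).1 he) (fun _ _ _ _ => rfl) n A hA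

lemma pt_pd [Finite D] (hdim : PosetDimLE1 D) (d : D) (n : ℕ) (A : C)
    (hA : HasProjectiveDimensionLT A (n + 1)) :
    HasProjectiveDimensionLT (ind (ptSet d) (ptSet_cvx d) A) (n + 1 + 1) := by
  obtain ⟨m, h1, h2, h3⟩ := exists_min hdim d
  have hsup : HasProjectiveDimensionLT (ind (supSet d) (supSet_cvx d) A) (n + 1) := by
    refine ind_pd (supSet d) (supSet_cvx d) (supSet_up d) m ?_ ?_ ?_ n A hA
    all_goals simpa only [supSet_iff]
  have hup := up_pd d n A hA
  have c1 : ∀ a b, a ≤ b → supSet d a = true → upSet d b = true →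
      supSet d b = true ∧ upSet d a = true := by
    intro a b hab ha hb
    simp only [supSet_iff, upSet_iff] at *
    exact ⟨ha.trans_le hab, ha.le⟩
  have c2 : ∀ a b, a ≤ b → upSet d a = true → ptSet d b = true →
      upSet d b = true ∧ ptSet d a = true := by
    intro a b hab ha hb
    simp only [ptSet_iff, upSet_iff] at *
    subst hb
    exact ⟨le_rfl, le_antisymm hab ha⟩
  have hS : (ShortComplex.mk _ _ (ind_sup_up_pt_zero d A c1 c2)).ShortExact := by
    refine shortExact_of_eval _ fun e => tr_shortExact A (supSet d e) (upSet d e) (ptSet d e) ?_ ?_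
    · rw [supSet_iff, ptSet_iff]
      rintro ⟨h, rfl⟩
      exact lt_irrefl _ h
    · rw [Bool.eq_iff_iff, Bool.or_eq_true, supSet_iff, ptSet_iff, upSet_iff, le_iff_lt_or_eq,
        eq_comm (a := d)]
  exact hS.hasProjectiveDimensionLT_X₃ (n + 1) hsup
    (hasProjectiveDimensionLT_of_ge _ (n + 1) _ (by omega))


lemma exists_toPt (X : D ⥤ C) (d : D) (hd : ∀ e, e < d → IsZero (X.obj e)) :
    ∃ f : X ⟶ ind (ptSet d) (ptSet_cvx d) (X.obj d), IsIso (f.app d) ∧ Epi f := by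
  have hz : ∀ e, e ≠ d → IsZero ((ind (ptSet d) (ptSet_cvx d) (X.obj d)).obj e) := by
    intro e he
    apply cut_isZero
    rw [← Bool.not_eq_true, ptSet_iff]
    exact he
  classical
  let app : ∀ e, X.obj e ⟶ (ind (ptSet d) (ptSet_cvx d) (X.obj d)).obj e := fun e =>
    if h : e = d then eqToHom (by rw [h]) ≫ ptMap (ptSet d) (ptSet_cvx d) (X.obj d) e else 0
  let f : X ⟶ ind (ptSet d) (ptSet_cvx d) (X.obj d) :=
    { app := app
      naturality := by
        intro a b g
        by_cases hb : b = d
        · subst hb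
          by_cases ha : a = b
          · subst ha
            obtain rfl : g = 𝟙 _ := Subsingleton.elim _ _
            simp
          · exact (hd a (lt_of_le_of_ne (leOfHom g) ha)).eq_of_src _ _
        · exact (hz b hb).eq_of_tgt _ _ }
  have happ : f.app d = ptMap (ptSet d) (ptSet_cvx d) (X.obj d) d := by
    simp [f, app]
  have hiso : IsIso (ptMap (ptSet d) (ptSet_cvx d) (X.obj d) d) := by
    have : ∀ b : Bool, b = true → IsIso (ptc (X.obj d) b) := by
      rintro b rfl
      exact inferInstanceAs (IsIso (𝟙 _))
    exact this _ ((ptSet_iff d d).2 rfl)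
  refine ⟨f, happ ▸ hiso, ?_⟩
  rw [NatTrans.epi_iff_epi_app]
  intro e
  by_cases he : e = d
  · subst he
    rw [happ]
    infer_instance
  · exact ⟨fun _ _ _ => (hz e he).eq_of_src _ _⟩

lemma functor_pd [Finite D] (hdim : PosetDimLE1 D) (n : ℕ)
    (hC : ∀ A : C, HasProjectiveDimensionLT A (n + 1)) (V : Finset D) :
    ∀ X : D ⥤ C, (∀ e, e ∉ V → IsZero (X.obj e)) →
      HasProjectiveDimensionLT X (n + 1 + 1) := by
  classical
  induction V using Finset.strongInduction with
  | H V ih =>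
    intro X hX
    rcases V.eq_empty_or_nonempty with rfl | hne
    · have h0 : IsZero X := (Functor.isZero_iff X).2 fun e => hX e (by simp)
      have := h0.hasProjectiveDimensionLT_zero
      exact hasProjectiveDimensionLT_of_ge X 0 _ (by omega)
    · obtain ⟨d, hd⟩ := V.exists_minimal hne
      obtain ⟨f, hfd, hf⟩ := exists_toPt X d (fun e he => hX e fun heV =>
        hd.not_lt heV he)
      have hS : (ShortComplex.mk _ _ (kernel.condition f)).ShortExact :=
        { exact := ShortComplex.exact_kernel _ }
      refine hS.hasProjectiveDimensionLT_X₂ _ ?_ (pt_pd hdim d n _ (hC _))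
      refine ih (V.erase d) (Finset.erase_ssubset hd.prop) _ ?_
      intro e he
      have hmono : Mono ((kernel.ι f).app e) :=
        (NatTrans.mono_iff_mono_app _).1 inferInstance e
      have hc : (kernel.ι f).app e ≫ f.app e = 0 := by
        rw [← NatTrans.comp_app, kernel.condition]
        rfl
      apply IsZero.of_mono_eq_zero ((kernel.ι f).app e)
      by_cases hed : e = d
      · subst hed
        rw [← cancel_mono (f.app e), hc, zero_comp]
      · exact (hX e fun heV => he (Finset.mem_erase.2 ⟨hed, heV⟩)).eq_of_tgt _ _

lemma exists_proj_over_pt (X : D ⥤ C) (d : D) :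
    ∃ (P : D ⥤ C) (_ : Projective P) (p : P ⟶ X), Epi (p.app d) := by
  have hP : Projective (ind (upSet d) (upSet_cvx d) (Projective.over (X.obj d))) :=
    ind_projective (upSet d) (upSet_cvx d) (upSet_up d) (fun _ => d)
      (fun _ _ => (upSet_iff d d).2 le_rfl)
      (fun e he => (upSet_iff d e).1 he) (fun _ _ _ _ => rfl) _
  let p : ind (upSet d) (upSet_cvx d) (Projective.over (X.obj d)) ⟶ X :=
    indDesc (upSet d) (upSet_cvx d) (upSet_up d)
      (fun e he => Projective.π (X.obj d) ≫ X.map (homOfLE ((upSet_iff d e).1 he)))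
      (fun a b h ha => by
        rw [Category.assoc, ← X.map_comp]
        rfl)
  refine ⟨_, hP, p, ?_⟩
  have h := ptMap_indDesc (upSet d) (upSet_cvx d) (upSet_up d)
      (fun e he => Projective.π (X.obj d) ≫ X.map (homOfLE ((upSet_iff d e).1 he)))
      (fun a b h ha => by
        rw [Category.assoc, ← X.map_comp]
        rfl) d ((upSet_iff d d).2 le_rfl)
  have h2 : ptMap (upSet d) (upSet_cvx d) _ d ≫ p.app d = Projective.π (X.obj d) := by
    refine h.trans ?_
    have : homOfLE ((upSet_iff d d).1 ((upSet_iff d d).2 le_rfl)) = 𝟙 d := Subsingleton.elim _ _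
    rw [this, X.map_id, Category.comp_id]
  exact epi_of_epi_fac h2

lemma enoughProjectives_functor [Finite D] : EnoughProjectives (D ⥤ C) := by
  refine ⟨fun X => ?_⟩
  choose P hP p hp using exists_proj_over_pt X
  have hproj : Projective (∐ P) := by
    refine ⟨fun {Y Z} f e _ => ⟨Sigma.desc fun b => Projective.factorThru (Sigma.ι P b ≫ f) e, ?_⟩⟩
    ext1 b
    simp
  refine ⟨{ p := ∐ P, projective := hproj, f := Sigma.desc p, epi := ?_ }⟩
  rw [NatTrans.epi_iff_epi_app]
  intro d
  have h : (Sigma.ι P d).app d ≫ (Sigma.desc p).app d = (p d).app d := by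
    rw [← NatTrans.comp_app, Sigma.ι_desc]
  have := hp d
  exact epi_of_epi_fac h

end Main

end PDFun

/-- **Statement 14.** Let `C` be an abelian category with enough projectives and `D` a finite
poset of dimension at most 1.  If every object of `C` has projective dimension at most `n`,
then every functor `X : D ⥤ C` has projective dimension at most `n + 1` in the functor
category `Fun(D, C)`. -/
theorem projDim_functor_category_le
    (C : Type u) [Category.{v} C] [Abelian C] [EnoughProjectives C]
    (D : Type) [PartialOrder D] [Fintype D] (hdim : PosetDimLE1 D)
    (n : ℕ) (hC : ∀ A : C, ProjDimLE n A) :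
    ∀ X : D ⥤ C, ProjDimLE (n + 1) X := by
  intro X
  have := PDFun.enoughProjectives_functor (C := C) (D := D)
  exact PDFun.projDimLE_of_hasPD (n + 1) X
    (PDFun.functor_pd hdim n (fun A => PDFun.hasPD_of_projDimLE (hC A)) Finset.univ X (by simp))
end
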